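/- Let n ≥ 2 and let c, d > 0 be constants. The function φ^{c,d}(x,y) = |x−y| / (c·((|x|^d + |y|^d)/2)^{1/d}) is a metric on ℝⁿ \ {0} if and only if d ≥ 1/3. -/

import Mathlib

/-- `f` is a metric on the subset `S`. -/
def IsMetricOn {E : Type*} (S : Set E) (f : E → E → ℝ) : Prop :=
  (∀ x ∈ S, ∀ y ∈ S, 0 ≤ f x y) ∧ (∀ x ∈ S, ∀ y ∈ S, (f x y = 0 ↔ x = y)) ∧
  (∀ x ∈ S, ∀ y ∈ S, f x y = f y x) ∧
  (∀ x ∈ S, ∀ y ∈ S, ∀ z ∈ S, f x y ≤ f x z + f z y)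

/-!
Following Hästö, `|x - y| / M(|x|, |y|)` is a metric on a punctured inner product space as soon as
its triangle inequality holds for ordered triples on a single ray: if `|z|` is not between `|x|`
and `|y|`, the usual triangle inequality or Ptolemy's inequality suffices, and otherwise a convex
combination of these two reduces the claim to the ray. For the power mean of exponent `d`,
logarithmic coordinates on the ray turn the remaining inequality into the subadditivity of
`H v = sinh v * cosh (d * v) ^ (-1 / d)` on `[0, ∞)`. The sign of `H''` is that of
`sinh ((1 - 2 * d) * v) - d * sinh v`, whose derivative at `0` is `1 - 3 * d`: for `1 / 3 ≤ d` the
function `H` is concave, and otherwise it is strictly convex near `0`.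
-/

open Real Set

lemma isMetricOn_const_mul_iff {E : Type*} {S : Set E} {f : E → E → ℝ} {k : ℝ} (hk : 0 < k) :
    IsMetricOn S (fun x y => k * f x y) ↔ IsMetricOn S f := by
  simp only [IsMetricOn, mul_nonneg_iff_of_pos_left hk, mul_eq_zero, hk.ne', false_or, ← mul_add,
    mul_le_mul_iff_right₀ hk, mul_right_inj' hk.ne']

/-- The `M`-relative distance of Hästö, for a function `M` of two positive real numbers. -/
noncomputable def relativeDist {V : Type*} [SeminormedAddCommGroup V] (M : ℝ → ℝ → ℝ)
    (x y : V) : ℝ :=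
  dist x y / M ‖x‖ ‖y‖

/-- Hästö's moderately increasing functions: `M` is positive and symmetric on positive arguments,
increasing in each variable, and `M a b / b` is decreasing in `b` (stated without division). -/
structure IsModeratelyIncreasing (M : ℝ → ℝ → ℝ) : Prop where
  pos : ∀ ⦃a b⦄, 0 < a → 0 < b → 0 < M a b
  comm : ∀ ⦃a b⦄, 0 < a → 0 < b → M a b = M b a
  mono_right : ∀ ⦃a b b'⦄, 0 < a → 0 < b → b ≤ b' → M a b ≤ M a b'
  mul_le_mul_right : ∀ ⦃a b b'⦄, 0 < a → 0 < b → b ≤ b' → b * M a b' ≤ b' * M a b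

/-- The triangle inequality for the `M`-relative distance of three points on an open ray from the
origin, in increasing order. -/
def RayTriangleInequality (M : ℝ → ℝ → ℝ) : Prop :=
  ∀ ⦃a t b : ℝ⦄, 0 < a → a ≤ t → t ≤ b →
    (b - a) / M a b ≤ (t - a) / M a t + (b - t) / M t b

lemma relativeDist_smul_smul {V : Type*} [SeminormedAddCommGroup V] [NormedSpace ℝ V]
    (M : ℝ → ℝ → ℝ) {e : V} (he : ‖e‖ = 1) {a b : ℝ} (ha : 0 ≤ a) (hab : a ≤ b) :
    relativeDist M (a • e) (b • e) = (b - a) / M a b := by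
  have hdist : dist (a • e) (b • e) = b - a := by
    rw [dist_comm, dist_eq_norm, ← sub_smul, norm_smul, he, mul_one,
      Real.norm_of_nonneg (sub_nonneg.2 hab)]
  have hnorm : ∀ {r : ℝ}, 0 ≤ r → ‖r • e‖ = r := fun hr => by
    rw [norm_smul, he, mul_one, Real.norm_of_nonneg hr]
  rw [relativeDist, hdist, hnorm ha, hnorm (ha.trans hab)]

lemma IsMetricOn.rayTriangleInequality {V : Type*} [NormedAddCommGroup V] [NormedSpace ℝ V]
    [Nontrivial V] {M : ℝ → ℝ → ℝ} (h : IsMetricOn {x : V | x ≠ 0} (relativeDist M)) :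
    RayTriangleInequality M := by
  intro a t b ha hat htb
  obtain ⟨e, he⟩ := exists_norm_eq V zero_le_one
  have he0 : e ≠ 0 := norm_ne_zero_iff.1 (he.trans_ne one_ne_zero)
  have ht : 0 < t := ha.trans_le hat
  have htri := h.2.2.2 (a • e) (smul_ne_zero ha.ne' he0) (b • e)
    (smul_ne_zero (ht.trans_le htb).ne' he0) (t • e) (smul_ne_zero ht.ne' he0)
  rwa [relativeDist_smul_smul M he ha.le (hat.trans htb), relativeDist_smul_smul M he ha.le hat,
    relativeDist_smul_smul M he ht.le htb] at htri

lemma dist_mul_norm_le {V : Type*} [NormedAddCommGroup V] [InnerProductSpace ℝ V] (x y z : V) :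
    dist x y * ‖z‖ ≤ dist x z * ‖y‖ + dist z y * ‖x‖ := by
  simpa using EuclideanGeometry.mul_dist_le_mul_dist_add_mul_dist x z y 0

namespace IsModeratelyIncreasing

variable {M : ℝ → ℝ → ℝ} {V : Type*} [NormedAddCommGroup V]

lemma mono_left (hM : IsModeratelyIncreasing M) {a a' b : ℝ} (ha : 0 < a) (hb : 0 < b)
    (h : a ≤ a') : M a b ≤ M a' b := by
  rw [hM.comm ha hb, hM.comm (ha.trans_le h) hb]
  exact hM.mono_right hb ha h

lemma mul_le_mul_left (hM : IsModeratelyIncreasing M) {a a' b : ℝ} (ha : 0 < a) (hb : 0 < b)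
    (h : a ≤ a') : a * M a' b ≤ a' * M a b := by
  rw [hM.comm ha hb, hM.comm (ha.trans_le h) hb]
  exact hM.mul_le_mul_right hb ha h

lemma relativeDist_nonneg (hM : IsModeratelyIncreasing M) {x y : V} (hx : x ≠ 0) (hy : y ≠ 0) :
    0 ≤ relativeDist M x y :=
  div_nonneg dist_nonneg (hM.pos (norm_pos_iff.2 hx) (norm_pos_iff.2 hy)).le

lemma relativeDist_eq_zero_iff (hM : IsModeratelyIncreasing M) {x y : V} (hx : x ≠ 0)
    (hy : y ≠ 0) : relativeDist M x y = 0 ↔ x = y := by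
  have hpos := hM.pos (norm_pos_iff.2 hx) (norm_pos_iff.2 hy)
  simp only [relativeDist, div_eq_zero_iff, hpos.ne', or_false, dist_eq_zero]

lemma relativeDist_comm (hM : IsModeratelyIncreasing M) {x y : V} (hx : x ≠ 0) (hy : y ≠ 0) :
    relativeDist M x y = relativeDist M y x := by
  rw [relativeDist, relativeDist, dist_comm, hM.comm (norm_pos_iff.2 hx) (norm_pos_iff.2 hy)]

lemma relativeDist_triangle_of_norm_le (hM : IsModeratelyIncreasing M) {x y z : V} (hz : z ≠ 0)
    (hzx : ‖z‖ ≤ ‖x‖) (hzy : ‖z‖ ≤ ‖y‖) :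
    relativeDist M x y ≤ relativeDist M x z + relativeDist M z y := by
  have ht : 0 < ‖z‖ := norm_pos_iff.2 hz
  have ha : 0 < ‖x‖ := ht.trans_le hzx
  have hb : 0 < ‖y‖ := ht.trans_le hzy
  have hxz : 0 < M ‖x‖ ‖z‖ := hM.pos ha ht
  have hzy' : 0 < M ‖z‖ ‖y‖ := hM.pos ht hb
  calc dist x y / M ‖x‖ ‖y‖
      ≤ (dist x z + dist z y) / M ‖x‖ ‖y‖ :=
        div_le_div_of_nonneg_right (dist_triangle x z y) (hM.pos ha hb).le
    _ = dist x z / M ‖x‖ ‖y‖ + dist z y / M ‖x‖ ‖y‖ := add_div _ _ _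
    _ ≤ dist x z / M ‖x‖ ‖z‖ + dist z y / M ‖z‖ ‖y‖ := by
        gcongr
        · exact hM.mono_right ha ht hzy
        · exact hM.mono_left ht hb hzx

variable [InnerProductSpace ℝ V]

lemma relativeDist_triangle_of_le_norm (hM : IsModeratelyIncreasing M) {x y z : V} (hx : x ≠ 0)
    (hy : y ≠ 0) (hxz : ‖x‖ ≤ ‖z‖) (hyz : ‖y‖ ≤ ‖z‖) :
    relativeDist M x y ≤ relativeDist M x z + relativeDist M z y := by
  have ha : 0 < ‖x‖ := norm_pos_iff.2 hx
  have hb : 0 < ‖y‖ := norm_pos_iff.2 hy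
  have ht : 0 < ‖z‖ := ha.trans_le hxz
  have hMxy : 0 < M ‖x‖ ‖y‖ := hM.pos ha hb
  have hMxz : 0 < M ‖x‖ ‖z‖ := hM.pos ha ht
  have hMzy : 0 < M ‖z‖ ‖y‖ := hM.pos ht hb
  calc dist x y / M ‖x‖ ‖y‖
      = dist x y * ‖z‖ / (‖z‖ * M ‖x‖ ‖y‖) := by field_simp
    _ ≤ (dist x z * ‖y‖ + dist z y * ‖x‖) / (‖z‖ * M ‖x‖ ‖y‖) := by
        gcongr
        exact dist_mul_norm_le x y z
    _ = dist x z * ‖y‖ / (‖z‖ * M ‖x‖ ‖y‖) + dist z y * ‖x‖ / (‖z‖ * M ‖x‖ ‖y‖) := add_div _ _ _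
    _ ≤ dist x z * ‖y‖ / (‖y‖ * M ‖x‖ ‖z‖) + dist z y * ‖x‖ / (‖x‖ * M ‖z‖ ‖y‖) := by
        gcongr (dist x z * ‖y‖) / ?_ + (dist z y * ‖x‖) / ?_
        · exact hM.mul_le_mul_right ha hb hyz
        · exact hM.mul_le_mul_left ha hb hxz
    _ = dist x z / M ‖x‖ ‖z‖ + dist z y / M ‖z‖ ‖y‖ := by field_simp

-- With `A`, `B`, `C` the reciprocals of `M` at `(x, y)`, `(x, z)`, `(z, y)`, split
-- `(|z| - |x|) * A = (|z| * C - |x| * A) + |z| * (A - C)`: the first summand is paired with the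
-- triangle inequality, the second one with Ptolemy's inequality.
lemma relativeDist_triangle_of_norm_lt_of_norm_le (hM : IsModeratelyIncreasing M)
    (hray : RayTriangleInequality M) {x y z : V} (hx : x ≠ 0) (hxz : ‖x‖ < ‖z‖)
    (hzy : ‖z‖ ≤ ‖y‖) :
    relativeDist M x y ≤ relativeDist M x z + relativeDist M z y := by
  have ha : 0 < ‖x‖ := norm_pos_iff.2 hx
  have ht : 0 < ‖z‖ := ha.trans hxz
  have hb : 0 < ‖y‖ := ht.trans_le hzy
  have hMxy : 0 < M ‖x‖ ‖y‖ := hM.pos ha hb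
  have hMzy : 0 < M ‖z‖ ‖y‖ := hM.pos ht hb
  have hCA : (M ‖z‖ ‖y‖)⁻¹ ≤ (M ‖x‖ ‖y‖)⁻¹ := inv_anti₀ hMxy (hM.mono_left ha hb hxz.le)
  have hAC : ‖x‖ * (M ‖x‖ ‖y‖)⁻¹ ≤ ‖z‖ * (M ‖z‖ ‖y‖)⁻¹ := by
    rw [← div_eq_mul_inv, ← div_eq_mul_inv, div_le_div_iff₀ hMxy hMzy]
    exact hM.mul_le_mul_left ha hb hxz.le
  have hline := hray ha hxz.le hzy
  simp only [relativeDist, div_eq_mul_inv] at hline ⊢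
  set A := (M ‖x‖ ‖y‖)⁻¹
  set B := (M ‖x‖ ‖z‖)⁻¹
  set C := (M ‖z‖ ‖y‖)⁻¹
  refine le_of_mul_le_mul_left ?_ (sub_pos.2 hxz)
  calc (‖z‖ - ‖x‖) * (dist x y * A)
      = (‖z‖ * C - ‖x‖ * A) * dist x y + (A - C) * (dist x y * ‖z‖) := by ring
    _ ≤ (‖z‖ * C - ‖x‖ * A) * (dist x z + dist z y) +
          (A - C) * (dist x z * ‖y‖ + dist z y * ‖x‖) :=
        add_le_add (mul_le_mul_of_nonneg_left (dist_triangle x z y) (sub_nonneg.2 hAC))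
          (mul_le_mul_of_nonneg_left (dist_mul_norm_le x y z) (sub_nonneg.2 hCA))
    _ = dist x z * ((‖y‖ - ‖x‖) * A - (‖y‖ - ‖z‖) * C) + (‖z‖ - ‖x‖) * (dist z y * C) := by ring
    _ ≤ dist x z * ((‖z‖ - ‖x‖) * B) + (‖z‖ - ‖x‖) * (dist z y * C) := by
        gcongr
        exact sub_le_iff_le_add.2 hline
    _ = (‖z‖ - ‖x‖) * (dist x z * B + dist z y * C) := by ring

lemma relativeDist_triangle (hM : IsModeratelyIncreasing M) (hray : RayTriangleInequality M)
    {x y z : V} (hx : x ≠ 0) (hy : y ≠ 0) (hz : z ≠ 0) :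
    relativeDist M x y ≤ relativeDist M x z + relativeDist M z y := by
  rcases le_or_gt ‖z‖ ‖x‖ with hzx | hxz <;> rcases le_or_gt ‖z‖ ‖y‖ with hzy | hyz
  · exact hM.relativeDist_triangle_of_norm_le hz hzx hzy
  · rw [hM.relativeDist_comm hx hy, hM.relativeDist_comm hx hz, hM.relativeDist_comm hz hy,
      add_comm]
    exact hM.relativeDist_triangle_of_norm_lt_of_norm_le hray hy hyz hzx
  · exact hM.relativeDist_triangle_of_norm_lt_of_norm_le hray hx hxz hzy
  · exact hM.relativeDist_triangle_of_le_norm hx hy hxz.le hyz.le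

theorem isMetricOn_relativeDist_iff [Nontrivial V] (hM : IsModeratelyIncreasing M) :
    IsMetricOn {x : V | x ≠ 0} (relativeDist M) ↔ RayTriangleInequality M :=
  ⟨IsMetricOn.rayTriangleInequality, fun hray =>
    ⟨fun _ hx _ hy => hM.relativeDist_nonneg hx hy,
      fun _ hx _ hy => hM.relativeDist_eq_zero_iff hx hy,
      fun _ hx _ hy => hM.relativeDist_comm hx hy,
      fun _ hx _ hy _ hz => hM.relativeDist_triangle hray hx hy hz⟩⟩

end IsModeratelyIncreasing

/-- The power mean of exponent `d` of two positive real numbers. For `d = 0` this is the constant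
`1` rather than the geometric mean. -/
noncomputable def powerMean (d a b : ℝ) : ℝ := ((a ^ d + b ^ d) / 2) ^ (1 / d)

/-- The power-mean relative distance of two points on a ray is twice this function, evaluated at
half of the logarithm of the ratio of their norms. -/
noncomputable def rayProfile (d v : ℝ) : ℝ := sinh v * cosh (d * v) ^ (-(1 / d))

section PowerMean

variable {d : ℝ}

lemma powerMean_pos (d : ℝ) {a b : ℝ} (ha : 0 < a) (hb : 0 < b) : 0 < powerMean d a b := by
  unfold powerMean
  positivity

lemma powerMean_comm (d a b : ℝ) : powerMean d a b = powerMean d b a := by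
  rw [powerMean, powerMean, add_comm]

lemma powerMean_le_powerMean_right (d : ℝ) {a b b' : ℝ} (ha : 0 < a) (hb : 0 < b) (h : b ≤ b') :
    powerMean d a b ≤ powerMean d a b' := by
  have hb' : 0 < b' := hb.trans_le h
  unfold powerMean
  rcases le_total 0 d with hd | hd
  · gcongr
  · refine rpow_le_rpow_of_nonpos (by positivity) ?_ (one_div_nonpos.2 hd)
    gcongr ((a ^ d + ?_) / 2)
    exact rpow_le_rpow_of_nonpos hb h hd

lemma powerMean_mul_mul (hd : d ≠ 0) {k a b : ℝ} (hk : 0 ≤ k) (ha : 0 ≤ a) (hb : 0 ≤ b) :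
    powerMean d (k * a) (k * b) = k * powerMean d a b := by
  rw [powerMean, powerMean, mul_rpow hk ha, mul_rpow hk hb, ← mul_add, mul_div_assoc,
    mul_rpow (by positivity) (by positivity), ← rpow_mul hk, mul_one_div_cancel hd, rpow_one]

lemma mul_powerMean_le_mul_powerMean (hd : d ≠ 0) {a b b' : ℝ} (ha : 0 < a) (hb : 0 < b)
    (h : b ≤ b') : b * powerMean d a b' ≤ b' * powerMean d a b := by
  have hb' : 0 < b' := hb.trans_le h
  calc b * powerMean d a b'
      = powerMean d (b * b') (b * a) := by
        rw [powerMean_mul_mul hd hb.le hb'.le ha.le, powerMean_comm]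
    _ ≤ powerMean d (b * b') (b' * a) :=
        powerMean_le_powerMean_right d (by positivity) (by positivity) (by gcongr)
    _ = b' * powerMean d a b := by
        rw [mul_comm b b', powerMean_mul_mul hd hb'.le hb.le ha.le, powerMean_comm]

lemma isModeratelyIncreasing_powerMean (hd : d ≠ 0) : IsModeratelyIncreasing (powerMean d) where
  pos _ _ := powerMean_pos d
  comm _ _ _ _ := powerMean_comm d _ _
  mono_right _ _ _ := powerMean_le_powerMean_right d
  mul_le_mul_right _ _ _ := mul_powerMean_le_mul_powerMean hd

lemma powerMean_exp_neg_exp (d h : ℝ) :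
    powerMean d (exp (-h)) (exp h) = cosh (d * h) ^ (1 / d) := by
  rw [powerMean, ← exp_mul, ← exp_mul, cosh_eq, add_comm, neg_mul, mul_comm h]

lemma sub_div_powerMean_exp_exp (hd : d ≠ 0) (α β : ℝ) :
    (exp β - exp α) / powerMean d (exp α) (exp β) = 2 * rayProfile d ((β - α) / 2) := by
  set m := (α + β) / 2 with hm
  set h := (β - α) / 2 with hh
  have hα : exp α = exp m * exp (-h) := by rw [← exp_add, hm, hh]; ring_nf
  have hβ : exp β = exp m * exp h := by rw [← exp_add, hm, hh]; ring_nf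
  calc (exp β - exp α) / powerMean d (exp α) (exp β)
      = exp m * (exp h - exp (-h)) / (exp m * cosh (d * h) ^ (1 / d)) := by
        rw [hα, hβ, powerMean_mul_mul hd (exp_pos _).le (exp_pos _).le (exp_pos _).le,
          powerMean_exp_neg_exp, mul_sub]
    _ = (exp h - exp (-h)) / cosh (d * h) ^ (1 / d) :=
        mul_div_mul_left _ _ (exp_pos m).ne'
    _ = 2 * rayProfile d h := by
        rw [rayProfile, sinh_eq, rpow_neg (cosh_pos _).le]
        ring

lemma rayTriangleInequality_powerMean_iff (hd : d ≠ 0) :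
    RayTriangleInequality (powerMean d) ↔
      ∀ ⦃p q : ℝ⦄, 0 ≤ p → 0 ≤ q → rayProfile d (p + q) ≤ rayProfile d p + rayProfile d q := by
  constructor
  · intro hray p q hp hq
    have h := hray (exp_pos (-2 * p)) (exp_le_exp.2 (by linarith : -2 * p ≤ 0))
      (exp_le_exp.2 (by linarith : 0 ≤ 2 * q))
    rw [sub_div_powerMean_exp_exp hd, sub_div_powerMean_exp_exp hd, sub_div_powerMean_exp_exp hd,
      show (2 * q - -2 * p) / 2 = p + q by ring, show (0 - -2 * p) / 2 = p by ring,
      show (2 * q - 0) / 2 = q by ring] at h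
    linarith
  · intro hsub a t b ha hat htb
    have ht : 0 < t := ha.trans_le hat
    have hlog_at : log a ≤ log t := log_le_log ha hat
    have hlog_tb : log t ≤ log b := log_le_log ht htb
    rw [← exp_log ha, ← exp_log ht, ← exp_log (ht.trans_le htb), sub_div_powerMean_exp_exp hd,
      sub_div_powerMean_exp_exp hd, sub_div_powerMean_exp_exp hd]
    have h := hsub (by linarith : 0 ≤ (log t - log a) / 2)
      (by linarith : 0 ≤ (log b - log t) / 2)
    rw [show (log t - log a) / 2 + (log b - log t) / 2 = (log b - log a) / 2 by ring] at h
    linarith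

end PowerMean

section Convexity

variable {f : ℝ → ℝ}

lemma map_add_le_of_concaveOn (hf : ConcaveOn ℝ (Ici 0) f) (hf0 : 0 ≤ f 0) {p q : ℝ} (hp : 0 ≤ p)
    (hq : 0 ≤ q) : f (p + q) ≤ f p + f q := by
  rcases (add_nonneg hp hq).eq_or_lt with h0 | hpos
  · obtain ⟨rfl, rfl⟩ := (add_eq_zero_iff_of_nonneg hp hq).1 h0.symm
    simpa using hf0
  have chord : ∀ {r s : ℝ}, 0 ≤ r → 0 ≤ s → r + s = p + q →
      r / (p + q) * f (p + q) ≤ f r := by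
    intro r s hr hs hrs
    have hsum : r / (p + q) + s / (p + q) = 1 := by rw [← add_div, hrs, div_self hpos.ne']
    have h := hf.2 (mem_Ici.2 hpos.le) (mem_Ici.2 le_rfl) (div_nonneg hr hpos.le)
      (div_nonneg hs hpos.le) hsum
    simp only [smul_eq_mul, mul_zero, add_zero, div_mul_cancel₀ _ hpos.ne'] at h
    have : 0 ≤ s / (p + q) * f 0 := by positivity
    linarith
  calc f (p + q) = p / (p + q) * f (p + q) + q / (p + q) * f (p + q) := by field_simp
    _ ≤ f p + f q := add_le_add (chord hp hq rfl) (chord hq hp (add_comm q p))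

lemma two_mul_map_lt_of_strictConvexOn {w : ℝ} (hw : 0 < w)
    (hf : StrictConvexOn ℝ (Icc 0 (2 * w)) f) (hf0 : f 0 ≤ 0) : 2 * f w < f (2 * w) := by
  have h := hf.2 (left_mem_Icc.2 (by positivity)) (right_mem_Icc.2 (by positivity))
    (by positivity : (0 : ℝ) ≠ 2 * w) one_half_pos one_half_pos (add_halves 1)
  simp only [smul_eq_mul, mul_zero, zero_add, one_div,
    inv_mul_cancel_left₀ (two_ne_zero' ℝ)] at h
  linarith

lemma exists_pos_forall_Ioo_pos_of_hasDerivAt {f' : ℝ} (hf : HasDerivAt f f' 0) (hf' : 0 < f')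
    (hf0 : f 0 = 0) : ∃ ε > 0, ∀ v ∈ Ioo 0 ε, 0 < f v := by
  have hsign := eventually_nhdsWithin_sign_eq_of_deriv_pos (hf.deriv.symm ▸ hf') hf0
  obtain ⟨ε, hε, hball⟩ := Metric.eventually_nhds_iff.1 hsign
  refine ⟨ε, hε, fun v hv => ?_⟩
  have hv_sign := hball (by simpa [abs_of_pos hv.1] using hv.2 : dist v 0 < ε)
  rwa [sub_zero, sign_pos hv.1, sign_eq_one_iff] at hv_sign

end Convexity

lemma convexOn_sinh : ConvexOn ℝ (Ici 0) sinh :=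
  convexOn_of_hasDerivWithinAt2_nonneg (convex_Ici 0) continuous_sinh.continuousOn
    (fun x _ => (hasDerivAt_sinh x).hasDerivWithinAt)
    (fun x _ => (hasDerivAt_cosh x).hasDerivWithinAt)
    (fun _ hx => sinh_nonneg_iff.2 (interior_subset hx))

lemma sinh_mul_le {l v : ℝ} (hl0 : 0 ≤ l) (hl1 : l ≤ 1) (hv : 0 ≤ v) :
    sinh (l * v) ≤ l * sinh v := by
  simpa using convexOn_sinh.2 hv (mem_Ici.2 le_rfl) hl0 (sub_nonneg.2 hl1) (by ring)

section RayProfile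

variable {d : ℝ}

lemma hasDerivAt_cosh_mul (k v : ℝ) :
    HasDerivAt (fun v => cosh (k * v)) (k * sinh (k * v)) v := by
  simpa [mul_comm] using ((hasDerivAt_id v).const_mul k).cosh

lemma hasDerivAt_cosh_mul_rpow (k p v : ℝ) :
    HasDerivAt (fun v => cosh (k * v) ^ p) (k * sinh (k * v) * p * cosh (k * v) ^ (p - 1)) v :=
  (hasDerivAt_cosh_mul k v).rpow_const (Or.inl (cosh_pos _).ne')

lemma hasDerivAt_rayProfile (hd : d ≠ 0) (v : ℝ) :
    HasDerivAt (rayProfile d) (cosh ((1 - d) * v) * cosh (d * v) ^ (-(1 / d) - 1)) v := by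
  refine ((hasDerivAt_sinh v).mul (hasDerivAt_cosh_mul_rpow d (-(1 / d)) v)).congr_deriv ?_
  have hpow : cosh (d * v) ^ (-(1 / d)) = cosh (d * v) ^ (-(1 / d) - 1) * cosh (d * v) := by
    rw [← rpow_add_one (cosh_pos _).ne', sub_add_cancel]
  have hcosh : cosh ((1 - d) * v) = cosh v * cosh (d * v) - sinh v * sinh (d * v) := by
    rw [← cosh_sub, sub_mul, one_mul]
  rw [hpow, hcosh]
  field_simp
  ring

lemma hasDerivAt_deriv_rayProfile (hd : d ≠ 0) (v : ℝ) :
    HasDerivAt (fun v => cosh ((1 - d) * v) * cosh (d * v) ^ (-(1 / d) - 1))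
      ((sinh ((1 - 2 * d) * v) - d * sinh v) * cosh (d * v) ^ (-(1 / d) - 2)) v := by
  refine ((hasDerivAt_cosh_mul (1 - d) v).mul
    (hasDerivAt_cosh_mul_rpow d (-(1 / d) - 1) v)).congr_deriv ?_
  have hpow : cosh (d * v) ^ (-(1 / d) - 1) = cosh (d * v) ^ (-(1 / d) - 2) * cosh (d * v) := by
    rw [← rpow_add_one (cosh_pos _).ne']
    ring_nf
  have hsinh : sinh v = sinh ((1 - d) * v) * cosh (d * v) + cosh ((1 - d) * v) * sinh (d * v) := by
    rw [← sinh_add]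
    ring_nf
  have hsinh' : sinh ((1 - 2 * d) * v) =
      sinh ((1 - d) * v) * cosh (d * v) - cosh ((1 - d) * v) * sinh (d * v) := by
    rw [← sinh_sub]
    ring_nf
  rw [sub_sub, one_add_one_eq_two, hpow, hsinh, hsinh']
  field_simp
  ring

lemma iterate_deriv_two_rayProfile (hd : d ≠ 0) (v : ℝ) :
    deriv^[2] (rayProfile d) v =
      (sinh ((1 - 2 * d) * v) - d * sinh v) * cosh (d * v) ^ (-(1 / d) - 2) := by
  have hderiv := funext fun v => (hasDerivAt_rayProfile hd v).deriv
  simp only [Function.iterate_succ, Function.iterate_zero, Function.comp_apply, id_eq, hderiv,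
    (hasDerivAt_deriv_rayProfile hd v).deriv]

lemma rayProfile_zero (d : ℝ) : rayProfile d 0 = 0 := by
  rw [rayProfile, sinh_zero, zero_mul]

lemma continuous_rayProfile (d : ℝ) : Continuous (rayProfile d) :=
  continuous_sinh.mul <|
    (continuous_cosh.comp (continuous_const_mul d)).rpow_const fun _ => Or.inl (cosh_pos _).ne'

lemma sinh_mul_le_mul_sinh (hd : 1 / 3 ≤ d) {v : ℝ} (hv : 0 ≤ v) :
    sinh ((1 - 2 * d) * v) ≤ d * sinh v := by
  have hs : 0 ≤ sinh v := sinh_nonneg_iff.2 hv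
  rcases le_total (1 / 2) d with h | h
  · have hneg : sinh ((1 - 2 * d) * v) ≤ 0 :=
      sinh_nonpos_iff.2 (mul_nonpos_of_nonpos_of_nonneg (by linarith) hv)
    exact hneg.trans (mul_nonneg (by linarith) hs)
  · calc sinh ((1 - 2 * d) * v) ≤ (1 - 2 * d) * sinh v :=
          sinh_mul_le (by linarith) (by linarith) hv
      _ ≤ d * sinh v := by
          gcongr
          linarith

lemma concaveOn_rayProfile (hd : 1 / 3 ≤ d) : ConcaveOn ℝ (Ici 0) (rayProfile d) := by
  have hd0 : d ≠ 0 := by linarith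
  refine concaveOn_of_hasDerivWithinAt2_nonpos (convex_Ici 0) (continuous_rayProfile d).continuousOn
    (fun v _ => (hasDerivAt_rayProfile hd0 v).hasDerivWithinAt)
    (fun v _ => (hasDerivAt_deriv_rayProfile hd0 v).hasDerivWithinAt) fun v hv => ?_
  exact mul_nonpos_of_nonpos_of_nonneg
    (sub_nonpos.2 (sinh_mul_le_mul_sinh hd (interior_subset hv))) (rpow_nonneg (cosh_pos _).le _)

lemma exists_strictConvexOn_rayProfile (hd0 : d ≠ 0) (hd : d < 1 / 3) :
    ∃ ε > 0, StrictConvexOn ℝ (Icc 0 ε) (rayProfile d) := by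
  have hderiv : HasDerivAt (fun v => sinh ((1 - 2 * d) * v) - d * sinh v) (1 - 3 * d) 0 := by
    refine ((((hasDerivAt_id (0 : ℝ)).const_mul (1 - 2 * d)).sinh).sub
      ((hasDerivAt_sinh 0).const_mul d)).congr_deriv ?_
    simp only [id_eq, mul_zero, cosh_zero]
    ring
  obtain ⟨ε, hε, hpos⟩ :=
    exists_pos_forall_Ioo_pos_of_hasDerivAt hderiv (by linarith) (by simp)
  refine ⟨ε, hε, strictConvexOn_of_deriv2_pos (convex_Icc 0 ε)
    (continuous_rayProfile d).continuousOn fun v hv => ?_⟩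
  rw [interior_Icc] at hv
  rw [iterate_deriv_two_rayProfile hd0]
  exact mul_pos (hpos v hv) (rpow_pos_of_pos (cosh_pos _) _)

lemma rayProfile_add_le_iff (hd0 : d ≠ 0) :
    (∀ ⦃p q : ℝ⦄, 0 ≤ p → 0 ≤ q → rayProfile d (p + q) ≤ rayProfile d p + rayProfile d q) ↔
      1 / 3 ≤ d := by
  refine ⟨fun hsub => ?_, fun hd _ _ =>
    map_add_le_of_concaveOn (concaveOn_rayProfile hd) (rayProfile_zero d).ge⟩
  by_contra! hd
  obtain ⟨ε, hε, hconv⟩ := exists_strictConvexOn_rayProfile hd0 hd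
  have hw : 0 < ε / 2 := half_pos hε
  have hlt : 2 * rayProfile d (ε / 2) < rayProfile d (2 * (ε / 2)) :=
    two_mul_map_lt_of_strictConvexOn hw (by rwa [mul_div_cancel₀ ε two_ne_zero])
      (rayProfile_zero d).le
  have hle := hsub hw.le hw.le
  rw [← two_mul, ← two_mul] at hle
  exact hlt.not_ge hle

end RayProfile

theorem stmt6_general {V : Type*} [NormedAddCommGroup V] [InnerProductSpace ℝ V] [Nontrivial V]
    {c d : ℝ} (hc : 0 < c) (hd : d ≠ 0) :
    IsMetricOn {x : V | x ≠ 0}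
      (fun x y => dist x y / (c * ((‖x‖ ^ d + ‖y‖ ^ d) / 2) ^ (1 / d))) ↔
    1 / 3 ≤ d := by
  have hscale : (fun x y : V => dist x y / (c * ((‖x‖ ^ d + ‖y‖ ^ d) / 2) ^ (1 / d))) =
      fun x y => c⁻¹ * relativeDist (powerMean d) x y := by
    funext x y
    rw [relativeDist, powerMean, inv_mul_eq_div, div_div, mul_comm c]
  rw [hscale, isMetricOn_const_mul_iff (inv_pos.2 hc),
    (isModeratelyIncreasing_powerMean hd).isMetricOn_relativeDist_iff,
    rayTriangleInequality_powerMean_iff hd, rayProfile_add_le_iff hd]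

theorem stmt6 (n : ℕ) (hn : 2 ≤ n) (c d : ℝ) (hc : 0 < c) (hd : 0 < d) :
    IsMetricOn {x : EuclideanSpace ℝ (Fin n) | x ≠ 0}
      (fun x y => dist x y / (c * ((‖x‖ ^ d + ‖y‖ ^ d) / 2) ^ (1 / d))) ↔
    1 / 3 ≤ d := by
  have : NeZero n := ⟨by lia⟩
  exact stmt6_general hc hd.ne'
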